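/- For every γ ∈ (0,1) there exists y* ∈ M such that G_γ(y*) = inf over y ∈ M of G_γ(y); that is, the functional G_γ attains its infimum on M. -/

import Mathlib

open MeasureTheory Set Real

noncomputable section

/-- Pairs `(y, y')` representing a function of Sobolev class `W¹₂[0,1]`:
`y` is absolutely continuous on `[0,1]` (being an integral of `y'`)
with derivative `y'` belonging to `L²[0,1]`. -/
def W12 : Set ((ℝ → ℝ) × (ℝ → ℝ)) :=
  {p | (∀ x ∈ Icc (0:ℝ) 1, p.1 x = p.1 0 + ∫ t in (0:ℝ)..x, p.2 t) ∧
    IntervalIntegrable p.2 volume 0 1 ∧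
    IntervalIntegrable (fun t => (p.2 t) ^ 2) volume 0 1}

/-- The Rayleigh quotient `(∫₀¹ ((y')² + q y²) dx) / (∫₀¹ y² dx)`. -/
def Rayleigh (q : ℝ → ℝ) (p : (ℝ → ℝ) × (ℝ → ℝ)) : ℝ :=
  (∫ t in (0:ℝ)..1, ((p.2 t) ^ 2 + q t * (p.1 t) ^ 2)) /
    ∫ t in (0:ℝ)..1, (p.1 t) ^ 2

/-- The smallest eigenvalue `λ₁(q)` of the Neumann problem `-y'' + q y = λ y`,
`y'(0) = y'(1) = 0`, defined as the infimum of Rayleigh quotients over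
nonzero `y ∈ W¹₂[0,1]`. -/
def lambda1 (q : ℝ → ℝ) : ℝ :=
  sInf {r | ∃ p ∈ W12, 0 < (∫ t in (0:ℝ)..1, (p.1 t) ^ 2) ∧ r = Rayleigh q p}

/-- The class `A_γ` of potentials: `q ∈ L¹[0,1]`, `q ≥ 0` a.e. on `[0,1]`,
`∫₀¹ q^γ dx = 1`. -/
def Agamma (γ : ℝ) : Set (ℝ → ℝ) :=
  {q | IntervalIntegrable q volume 0 1 ∧
    (∀ᵐ t ∂(volume.restrict (Icc (0:ℝ) 1)), 0 ≤ q t) ∧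
    (∫ t in (0:ℝ)..1, q t ^ γ) = 1}

/-- `m_γ := inf_{q ∈ A_γ} λ₁(q)`. -/
def mGamma (γ : ℝ) : ℝ := sInf (lambda1 '' Agamma γ)

/-- The set `M` of uniformly positive functions of class `W¹₂[0,1]`. -/
def Mset : Set ((ℝ → ℝ) × (ℝ → ℝ)) :=
  {p ∈ W12 | ∃ ζ > (0:ℝ), ∀ x ∈ Icc (0:ℝ) 1, ζ ≤ p.1 x}

/-- `J_γ(y) := ∫₀¹ (y')² dx + (∫₀¹ y^{2γ/(γ−1)} dx)^{(γ−1)/γ}`. -/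
def Jg (γ : ℝ) (p : (ℝ → ℝ) × (ℝ → ℝ)) : ℝ :=
  (∫ t in (0:ℝ)..1, (p.2 t) ^ 2) +
    (∫ t in (0:ℝ)..1, (p.1 t) ^ (2 * γ / (γ - 1))) ^ ((γ - 1) / γ)

/-- `G_γ(y) := J_γ(y) / ∫₀¹ y² dx`. -/
def Gg (γ : ℝ) (p : (ℝ → ℝ) × (ℝ → ℝ)) : ℝ :=
  Jg γ p / ∫ t in (0:ℝ)..1, (p.1 t) ^ 2

open Filter Topology

lemma exists_subseq_tendsto_inner {H : Type*} [NormedAddCommGroup H] [InnerProductSpace ℝ H]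
    [CompleteSpace H] [TopologicalSpace.SeparableSpace H] {f : ℕ → H} {C : ℝ}
    (hf : ∀ n, ‖f n‖ ≤ C) :
    ∃ (g : H) (φ : ℕ → ℕ), StrictMono φ ∧
      ∀ v, Tendsto (fun n => inner ℝ (f (φ n)) v) atTop (𝓝 (inner ℝ g v)) := by
  obtain ⟨a, -, φ, hφ, ha⟩ := WeakDual.isSeqCompact_closedBall ℝ H 0 C
    (x := fun n => StrongDual.toWeakDual (InnerProductSpace.toDual ℝ H (f n)))
    (fun n => by simpa using hf n)
  refine ⟨(InnerProductSpace.toDual ℝ H).symm (WeakDual.toStrongDual a), φ, hφ, fun v => ?_⟩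
  rw [InnerProductSpace.toDual_symm_apply]
  exact ((WeakDual.eval_continuous v).tendsto a).comp ha

lemma norm_sq_le_of_tendsto_inner {H : Type*} [NormedAddCommGroup H] [InnerProductSpace ℝ H]
    {f : ℕ → H} {g : H} {L : ℝ}
    (hg : Tendsto (fun n => inner ℝ (f n) g) atTop (𝓝 (inner ℝ g g)))
    (hL : Tendsto (fun n => ‖f n‖ ^ 2) atTop (𝓝 L)) : ‖g‖ ^ 2 ≤ L := by
  have h := ((hL.sub (hg.const_mul 2)).add_const (‖g‖ ^ 2))
  have h0 : 0 ≤ L - 2 * inner ℝ g g + ‖g‖ ^ 2 := by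
    refine ge_of_tendsto' h fun n => ?_
    rw [← norm_sub_sq_real]
    positivity
  rw [real_inner_self_eq_norm_sq] at h0
  linarith

lemma W12.continuousOn {p : (ℝ → ℝ) × (ℝ → ℝ)} (hp : p ∈ W12) : ContinuousOn p.1 (Icc 0 1) := by
  have h : ContinuousOn (fun x => p.1 0 + ∫ t in (0:ℝ)..x, p.2 t) (Icc 0 1) := by
    have := intervalIntegral.continuousOn_primitive_interval (μ := volume) (f := p.2) (a := 0)
      (b := 1) (by
        rw [uIcc_of_le zero_le_one, integrableOn_Icc_iff_integrableOn_Ioc]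
        exact (intervalIntegrable_iff_integrableOn_Ioc_of_le zero_le_one).1 hp.2.1)
    rw [uIcc_of_le zero_le_one] at this
    exact continuousOn_const.add this
  exact h.congr hp.1

lemma W12.memLp {p : (ℝ → ℝ) × (ℝ → ℝ)} (hp : p ∈ W12) :
    MemLp p.2 2 (volume.restrict (Ioc (0:ℝ) 1)) := by
  have h1 := (intervalIntegrable_iff_integrableOn_Ioc_of_le zero_le_one).1 hp.2.1
  have h2 := (intervalIntegrable_iff_integrableOn_Ioc_of_le zero_le_one).1 hp.2.2
  exact (memLp_two_iff_integrable_sq h1.aestronglyMeasurable).2 h2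

lemma integral_sq_eq_norm_toLp_sq {f : ℝ → ℝ} (hf : MemLp f 2 (volume.restrict (Ioc (0:ℝ) 1))) :
    ∫ t in (0:ℝ)..1, f t ^ 2 = ‖hf.toLp f‖ ^ 2 := by
  rw [← real_inner_self_eq_norm_sq, L2.inner_def, intervalIntegral.integral_of_le zero_le_one]
  refine integral_congr_ae ?_
  filter_upwards [hf.coeFn_toLp] with t ht
  rw [ht, real_inner_self_eq_norm_sq, Real.norm_eq_abs, sq_abs]

lemma inner_indicator_Ioc {g : Lp ℝ 2 (volume.restrict (Ioc (0:ℝ) 1))} {x : ℝ}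
    (hx : x ∈ Icc (0:ℝ) 1) :
    inner ℝ g (indicatorConstLp 2 (measurableSet_Ioc (a := (0:ℝ)) (b := x))
      (measure_ne_top (volume.restrict (Ioc (0:ℝ) 1)) _) (1:ℝ)) = ∫ t in (0:ℝ)..x, g t := by
  rw [real_inner_comm, L2.inner_indicatorConstLp_one, intervalIntegral.integral_of_le hx.1,
    Measure.restrict_restrict measurableSet_Ioc,
    inter_eq_left.2 (Ioc_subset_Ioc_right hx.2)]

lemma W12.exists_subseq {u : ℕ → (ℝ → ℝ) × (ℝ → ℝ)} (hu : ∀ n, u n ∈ W12) {C D : ℝ}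
    (hC : ∀ n, |(u n).1 0| ≤ C) (hD : ∀ n, ∫ t in (0:ℝ)..1, (u n).2 t ^ 2 ≤ D ^ 2) (hD0 : 0 ≤ D) :
    ∃ y ∈ W12, ∃ φ : ℕ → ℕ, StrictMono φ ∧
      (∀ x ∈ Icc (0:ℝ) 1, Tendsto (fun n => (u (φ n)).1 x) atTop (𝓝 (y.1 x))) ∧
      ∀ L, Tendsto (fun n => ∫ t in (0:ℝ)..1, (u (φ n)).2 t ^ 2) atTop (𝓝 L) →
        ∫ t in (0:ℝ)..1, y.2 t ^ 2 ≤ L := by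
  obtain ⟨c, -, φ, hφ, hc⟩ := (isCompact_Icc (a := -C) (b := C)).tendsto_subseq
    (x := fun n => (u n).1 0) (fun n => abs_le.1 (hC n))
  have hm := fun n => W12.memLp (hu n)
  have : Fact ((2 : ENNReal) ≠ ⊤) := ⟨ENNReal.ofNat_ne_top⟩
  obtain ⟨g, ψ, hψ, hg⟩ := exists_subseq_tendsto_inner (f := fun n => (hm (φ n)).toLp _) (C := D)
    (fun n => by
      rw [← abs_of_nonneg hD0, ← abs_norm, ← sq_le_sq, ← integral_sq_eq_norm_toLp_sq]
      exact hD _)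
  have hgm : MemLp g 2 (volume.restrict (Ioc (0:ℝ) 1)) := Lp.memLp g
  have hg2 : ∫ t in (0:ℝ)..1, g t ^ 2 = ‖g‖ ^ 2 := by
    rw [integral_sq_eq_norm_toLp_sq hgm, Lp.toLp_coeFn]
  refine ⟨(fun x => c + ∫ t in (0:ℝ)..x, g t, g), ⟨?_, ?_, ?_⟩, φ ∘ ψ, hφ.comp hψ, ?_, ?_⟩
  · intro x _
    simp
  · exact (intervalIntegrable_iff_integrableOn_Ioc_of_le zero_le_one).2
      (hgm.integrable one_le_two)
  · exact (intervalIntegrable_iff_integrableOn_Ioc_of_le zero_le_one).2 hgm.integrable_sq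
  · intro x hx
    have h := (hc.comp hψ.tendsto_atTop).add (hg (indicatorConstLp 2
      (measurableSet_Ioc (a := (0:ℝ)) (b := x)) (measure_ne_top _ _) (1:ℝ)))
    rw [inner_indicator_Ioc hx] at h
    refine h.congr fun n => ?_
    rw [inner_indicator_Ioc hx, Function.comp_apply, Function.comp_apply, Function.comp_apply,
      (hu (φ (ψ n))).1 x hx]
    congr 1
    rw [intervalIntegral.integral_of_le hx.1, intervalIntegral.integral_of_le hx.1]
    exact integral_congr_ae
      (ae_restrict_of_ae_restrict_of_subset (Ioc_subset_Ioc_right hx.2) (hm _).coeFn_toLp)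
  · intro L hL
    rw [hg2]
    refine norm_sq_le_of_tendsto_inner (hg g) (hL.congr fun n => ?_)
    exact integral_sq_eq_norm_toLp_sq (hm _)

lemma sq_integral_le_mul_integral_sq {f : ℝ → ℝ} {a b : ℝ} (hab : a ≤ b)
    (hf : IntervalIntegrable f volume a b)
    (hf2 : IntervalIntegrable (fun t => f t ^ 2) volume a b) :
    (∫ t in a..b, f t) ^ 2 ≤ (b - a) * ∫ t in a..b, f t ^ 2 := by
  rcases hab.eq_or_lt with rfl | hlt
  · simp
  set I := ∫ t in a..b, f t with hI
  have h0 : 0 ≤ ∫ t in a..b, ((b - a) * f t - I) ^ 2 :=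
    intervalIntegral.integral_nonneg hab fun t _ => sq_nonneg _
  have h1 : ∫ t in a..b, ((b - a) * f t - I) ^ 2 =
      (b - a) * ((b - a) * (∫ t in a..b, f t ^ 2) - I ^ 2) := by
    have : ∀ t, ((b - a) * f t - I) ^ 2 = (b - a) ^ 2 * f t ^ 2 - 2 * (b - a) * I * f t + I ^ 2 :=
      fun t => by ring
    simp_rw [this]
    rw [intervalIntegral.integral_add ((hf2.const_mul _).sub (hf.const_mul _))
      intervalIntegrable_const,
      intervalIntegral.integral_sub (hf2.const_mul _) (hf.const_mul _),
      intervalIntegral.integral_const_mul, intervalIntegral.integral_const_mul,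
      intervalIntegral.integral_const, ← hI, smul_eq_mul]
    ring
  rw [h1] at h0
  linarith [nonneg_of_mul_nonneg_right h0 (sub_pos.2 hlt)]

lemma W12.sq_sub_le {p : (ℝ → ℝ) × (ℝ → ℝ)} (hp : p ∈ W12) {x z : ℝ}
    (hx : x ∈ Icc (0:ℝ) 1) (hz : z ∈ Icc (0:ℝ) 1) :
    (p.1 x - p.1 z) ^ 2 ≤ |x - z| * ∫ t in (0:ℝ)..1, p.2 t ^ 2 := by
  wlog h : z ≤ x generalizing x z
  · rw [← neg_sub, neg_sq, abs_sub_comm]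
    exact this hz hx (le_of_not_ge h)
  have sub : uIcc z x ⊆ uIcc 0 1 := by
    rw [uIcc_of_le h, uIcc_of_le zero_le_one]
    exact Icc_subset_Icc hz.1 hx.2
  have sub0 : ∀ {w}, w ∈ Icc (0:ℝ) 1 → uIcc 0 w ⊆ uIcc (0:ℝ) 1 := fun {w} hw => by
    rw [uIcc_of_le hw.1, uIcc_of_le zero_le_one]
    exact Icc_subset_Icc_right hw.2
  rw [hp.1 x hx, hp.1 z hz, add_sub_add_left_eq_sub,
    intervalIntegral.integral_interval_sub_left (hp.2.1.mono_set (sub0 hx))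
      (hp.2.1.mono_set (sub0 hz)), abs_of_nonneg (sub_nonneg.2 h)]
  refine (sq_integral_le_mul_integral_sq h (hp.2.1.mono_set sub) (hp.2.2.mono_set sub)).trans ?_
  gcongr
  · exact intervalIntegral.integral_mono_interval hz.1 h hx.2
      (Eventually.of_forall fun t => sq_nonneg _) hp.2.2

lemma W12.intervalIntegrable_sq {p : (ℝ → ℝ) × (ℝ → ℝ)} (hp : p ∈ W12) :
    IntervalIntegrable (fun t => p.1 t ^ 2) volume 0 1 :=
  ContinuousOn.intervalIntegrable_of_Icc zero_le_one ((W12.continuousOn hp).pow 2)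

lemma W12.sq_bounds {p : (ℝ → ℝ) × (ℝ → ℝ)} (hp : p ∈ W12)
    (h1 : ∫ t in (0:ℝ)..1, p.1 t ^ 2 = 1) (hD : ∫ t in (0:ℝ)..1, p.2 t ^ 2 ≤ 3 / 2) {z : ℝ}
    (hz : z ∈ Icc (0:ℝ) 1) : 1 / 56 ≤ p.1 z ^ 2 ∧ p.1 z ^ 2 ≤ 5 := by
  have hint : ∀ a b c : ℝ, IntervalIntegrable (fun x => a + b * x + c * p.1 x ^ 2) volume 0 1 :=
    fun a b c => ((intervalIntegrable_const).add
      (Continuous.intervalIntegrable (by fun_prop) _ _)).add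
      ((W12.intervalIntegrable_sq hp).const_mul c)
  have hval : ∀ a b c : ℝ, ∫ x in (0:ℝ)..1, (a + b * x + c * p.1 x ^ 2) = a + b / 2 + c := by
    intro a b c
    rw [intervalIntegral.integral_add ((intervalIntegrable_const).add
      (Continuous.intervalIntegrable (by fun_prop) _ _))
      ((W12.intervalIntegrable_sq hp).const_mul c), intervalIntegral.integral_add
      intervalIntegrable_const (Continuous.intervalIntegrable (by fun_prop) _ _),
      intervalIntegral.integral_const_mul, intervalIntegral.integral_const_mul, h1]
    simp
    ring
  have hdiff : ∀ x ∈ Icc (0:ℝ) 1, (p.1 x - p.1 z) ^ 2 ≤ (x + z - 2 * x * z) * (3 / 2) := by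
    intro x hx
    have habs : |x - z| ≤ x + z - 2 * x * z := by
      rw [abs_le]
      constructor <;> nlinarith [hx.1, hx.2, hz.1, hz.2, mul_nonneg hx.1 (sub_nonneg.2 hz.2),
        mul_nonneg hz.1 (sub_nonneg.2 hx.2)]
    have h0 : 0 ≤ ∫ t in (0:ℝ)..1, p.2 t ^ 2 :=
      intervalIntegral.integral_nonneg zero_le_one fun t _ => sq_nonneg _
    exact (W12.sq_sub_le hp hx hz).trans
      (mul_le_mul habs hD h0 ((abs_nonneg _).trans habs))
  constructor
  · have h := intervalIntegral.integral_mono_on zero_le_one (hint 0 0 1)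
      (hint (7 * p.1 z ^ 2 + 7 / 4 * z) (7 / 4 * (1 - 2 * z)) 0) (fun x hx => by
        nlinarith [hdiff x hx, sq_nonneg (6 * p.1 z - (p.1 x - p.1 z))])
    rw [hval, hval] at h
    linarith
  · have h := intervalIntegral.integral_mono_on zero_le_one (hint (p.1 z ^ 2) 0 0)
      (hint (3 * z) (3 * (1 - 2 * z)) 2) (fun x hx => by
        nlinarith [hdiff x hx, sq_nonneg (p.1 z - 2 * p.1 x)])
    rw [hval, hval] at h
    linarith

lemma Mset.integral_sq_pos {p : (ℝ → ℝ) × (ℝ → ℝ)} (hp : p ∈ Mset) :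
    0 < ∫ t in (0:ℝ)..1, p.1 t ^ 2 := by
  obtain ⟨ζ, hζ, h⟩ := hp.2
  refine intervalIntegral.intervalIntegral_pos_of_pos_on (W12.intervalIntegrable_sq hp.1)
    (fun x hx => ?_) zero_lt_one
  have := h x (Ioo_subset_Icc_self hx)
  have : 0 < p.1 x := by linarith
  positivity

lemma Mset.integral_rpow_nonneg {p : (ℝ → ℝ) × (ℝ → ℝ)} (hp : p ∈ Mset) (a : ℝ) :
    0 ≤ ∫ t in (0:ℝ)..1, p.1 t ^ a := by
  obtain ⟨ζ, hζ, h⟩ := hp.2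
  exact intervalIntegral.integral_nonneg zero_le_one fun x hx =>
    Real.rpow_nonneg (hζ.le.trans (h x hx)) _

lemma Gg_nonneg (γ : ℝ) {p : (ℝ → ℝ) × (ℝ → ℝ)} (hp : p ∈ Mset) : 0 ≤ Gg γ p :=
  div_nonneg (add_nonneg (intervalIntegral.integral_nonneg zero_le_one fun _ _ => sq_nonneg _)
    (Real.rpow_nonneg (Mset.integral_rpow_nonneg hp _) _)) (Mset.integral_sq_pos hp).le

lemma Mset.exists_normalized {γ : ℝ} (hγ : γ ∈ Ioo (0:ℝ) 1) {p : (ℝ → ℝ) × (ℝ → ℝ)}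
    (hp : p ∈ Mset) :
    ∃ q ∈ Mset, ∫ t in (0:ℝ)..1, q.1 t ^ 2 = 1 ∧ Gg γ q = Gg γ p := by
  have hpos := Mset.integral_sq_pos hp
  obtain ⟨ζ, hζ, h⟩ := hp.2
  set S := ∫ t in (0:ℝ)..1, p.1 t ^ 2 with hS
  set c := (√S)⁻¹ with hc
  have hc0 : 0 < c := by positivity
  have hcS : c ^ 2 * S = 1 := by
    rw [hc, inv_pow, Real.sq_sqrt hpos.le, inv_mul_cancel₀ hpos.ne']
  have hsq : ∫ t in (0:ℝ)..1, (c * p.1 t) ^ 2 = 1 := by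
    simp_rw [mul_pow]
    rw [intervalIntegral.integral_const_mul, ← hS, hcS]
  refine ⟨(fun x => c * p.1 x, fun x => c * p.2 x), ⟨⟨?_, ?_, ?_⟩, c * ζ, by positivity, ?_⟩,
    hsq, ?_⟩
  · intro x hx
    simp only [intervalIntegral.integral_const_mul]
    rw [hp.1.1 x hx, mul_add]
  · exact hp.1.2.1.const_mul c
  · simp_rw [mul_pow]
    exact hp.1.2.2.const_mul _
  · intro x hx
    exact mul_le_mul_of_nonneg_left (h x hx) hc0.le
  · have hr : ∫ t in (0:ℝ)..1, (c * p.1 t) ^ (2 * γ / (γ - 1)) =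
        c ^ (2 * γ / (γ - 1)) * ∫ t in (0:ℝ)..1, p.1 t ^ (2 * γ / (γ - 1)) := by
      rw [← intervalIntegral.integral_const_mul]
      refine intervalIntegral.integral_congr fun t ht => ?_
      rw [uIcc_of_le zero_le_one] at ht
      exact Real.mul_rpow hc0.le (hζ.le.trans (h t ht))
    have he : 2 * γ / (γ - 1) * ((γ - 1) / γ) = 2 := by
      have h1 : γ - 1 ≠ 0 := by linarith [hγ.2]
      have h2 : γ ≠ 0 := hγ.1.ne'
      field_simp
    simp only [Gg, Jg]
    rw [hsq, hr, Real.mul_rpow (by positivity) (Mset.integral_rpow_nonneg hp _),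
      ← Real.rpow_mul hc0.le, he, Real.rpow_two]
    simp_rw [mul_pow]
    rw [intervalIntegral.integral_const_mul, ← hS, div_one, eq_div_iff hpos.ne', ← mul_add,
      mul_right_comm, hcS, one_mul]

lemma tendsto_intervalIntegral_comp {F : ℕ → ℝ → ℝ} {f g : ℝ → ℝ} {a b : ℝ}
    (hF : ∀ n, ContinuousOn (F n) (Icc 0 1)) (hFab : ∀ n, ∀ x ∈ Icc (0:ℝ) 1, F n x ∈ Icc a b)
    (hlim : ∀ x ∈ Icc (0:ℝ) 1, Tendsto (fun n => F n x) atTop (𝓝 (f x)))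
    (hfab : ∀ x ∈ Icc (0:ℝ) 1, f x ∈ Icc a b) (hg : ContinuousOn g (Icc a b)) :
    Tendsto (fun n => ∫ x in (0:ℝ)..1, g (F n x)) atTop (𝓝 (∫ x in (0:ℝ)..1, g (f x))) := by
  obtain ⟨B, hB⟩ := isCompact_Icc.exists_bound_of_continuousOn hg
  have hsub : ∀ {x : ℝ}, x ∈ uIoc 0 1 → x ∈ Icc (0:ℝ) 1 := fun {x} hx => by
    rw [uIoc_of_le zero_le_one] at hx
    exact Ioc_subset_Icc_self hx
  refine intervalIntegral.tendsto_integral_filter_of_dominated_convergence (fun _ => B)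
    (Eventually.of_forall fun n => ?_) (Eventually.of_forall fun n => Eventually.of_forall
      fun x hx => hB _ (hFab n x (hsub hx))) intervalIntegrable_const
    (Eventually.of_forall fun x hx => ?_)
  · exact ((hg.comp (hF n) (hFab n)).mono fun x hx => hsub hx).aestronglyMeasurable
      measurableSet_uIoc
  · exact (hg (f x) (hfab x (hsub hx))).tendsto.comp (tendsto_nhdsWithin_iff.2
      ⟨hlim x (hsub hx), Eventually.of_forall fun n => hFab n x (hsub hx)⟩)

lemma one_mem_Mset : ((fun _ => 1, fun _ => 0) : (ℝ → ℝ) × (ℝ → ℝ)) ∈ Mset :=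
  ⟨⟨by simp, by simp, by simp⟩, 1, one_pos, by simp⟩

lemma Gg_one (γ : ℝ) : Gg γ (fun _ => 1, fun _ => 0) = 1 := by
  simp [Gg, Jg]

lemma Gg_eq_of_integral_sq_eq_one (γ : ℝ) {p : (ℝ → ℝ) × (ℝ → ℝ)}
    (hp : ∫ t in (0:ℝ)..1, p.1 t ^ 2 = 1) : Gg γ p = Jg γ p := by
  rw [Gg, hp, div_one]

/-- For every `γ ∈ (0,1)` the functional `G_γ` attains its infimum on `M`. -/
theorem Gg_attains_inf (γ : ℝ) (hγ : γ ∈ Ioo (0:ℝ) 1) :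
    ∃ ystar ∈ Mset, Gg γ ystar = sInf (Gg γ '' Mset) := by
  set m := sInf (Gg γ '' Mset) with hm
  have hne : (Gg γ '' Mset).Nonempty := ⟨_, _, one_mem_Mset, rfl⟩
  have hbdd : BddBelow (Gg γ '' Mset) := ⟨0, by rintro _ ⟨p, hp, rfl⟩; exact Gg_nonneg γ hp⟩
  have hm1 : m ≤ 1 := csInf_le hbdd ⟨_, one_mem_Mset, Gg_one γ⟩
  have hseq : ∀ n : ℕ, ∃ u ∈ Mset, ∫ t in (0:ℝ)..1, u.1 t ^ 2 = 1 ∧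
      Gg γ u < m + 1 / 2 * (1 / ((n:ℝ) + 1)) := by
    intro n
    obtain ⟨_, ⟨p, hp, rfl⟩, hlt⟩ := exists_lt_of_csInf_lt hne
      (show m < m + 1 / 2 * (1 / ((n:ℝ) + 1)) from lt_add_of_pos_right _ (by positivity))
    obtain ⟨q, hq, hq1, hqp⟩ := Mset.exists_normalized hγ hp
    exact ⟨q, hq, hq1, hqp ▸ hlt⟩
  choose u huM hu1 hult using hseq
  have hlim : Tendsto (fun n => Jg γ (u n)) atTop (𝓝 m) := by
    have h := (tendsto_one_div_add_atTop_nhds_zero_nat (𝕜 := ℝ)).const_mul (1 / 2 : ℝ)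
    have h' := h.const_add m
    rw [mul_zero, add_zero] at h'
    refine tendsto_of_tendsto_of_tendsto_of_le_of_le tendsto_const_nhds h' (fun n => ?_)
      (fun n => ?_)
    · exact (csInf_le hbdd ⟨_, huM n, rfl⟩).trans_eq (Gg_eq_of_integral_sq_eq_one γ (hu1 n))
    · exact (Gg_eq_of_integral_sq_eq_one γ (hu1 n)).symm.trans_le (hult n).le
  have hD : ∀ n, ∫ t in (0:ℝ)..1, (u n).2 t ^ 2 ≤ 3 / 2 := by
    intro n
    have h1 : (1 : ℝ) / ((n:ℝ) + 1) ≤ 1 := by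
      rw [div_le_one (by positivity)]
      linarith [n.cast_nonneg (α := ℝ)]
    have h2 := hult n
    rw [Gg_eq_of_integral_sq_eq_one γ (hu1 n), Jg] at h2
    have h3 := Real.rpow_nonneg (Mset.integral_rpow_nonneg (huM n) (2 * γ / (γ - 1)))
      ((γ - 1) / γ)
    linarith
  have hbounds : ∀ n, ∀ x ∈ Icc (0:ℝ) 1, (u n).1 x ∈ Icc (1 / 8 : ℝ) 3 := by
    intro n x hx
    obtain ⟨h1, h2⟩ := W12.sq_bounds (huM n).1 (hu1 n) (hD n) hx
    obtain ⟨ζ, hζ, h⟩ := (huM n).2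
    have := h x hx
    constructor <;> nlinarith
  obtain ⟨y, hyW, φ, hφ, hy, hyL⟩ := W12.exists_subseq (fun n => (huM n).1) (C := 3) (D := 2)
    (fun n => by
      have h := hbounds n 0 (left_mem_Icc.2 zero_le_one)
      rw [abs_le]
      constructor <;> linarith [h.1, h.2])
    (fun n => (hD n).trans (by norm_num)) zero_le_two
  have hyb : ∀ x ∈ Icc (0:ℝ) 1, y.1 x ∈ Icc (1 / 8 : ℝ) 3 := fun x hx =>
    isClosed_Icc.mem_of_tendsto (hy x hx) (Eventually.of_forall fun n => hbounds _ x hx)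
  have hyM : y ∈ Mset := ⟨hyW, 1 / 8, by norm_num, fun x hx => (hyb x hx).1⟩
  have hconv : ∀ g : ℝ → ℝ, ContinuousOn g (Icc (1 / 8 : ℝ) 3) →
      Tendsto (fun n => ∫ x in (0:ℝ)..1, g ((u (φ n)).1 x)) atTop
        (𝓝 (∫ x in (0:ℝ)..1, g (y.1 x))) := fun g hg =>
    tendsto_intervalIntegral_comp (fun n => W12.continuousOn (huM (φ n)).1)
      (fun n => hbounds (φ n)) hy hyb hg
  have hrpow : ContinuousOn (fun s : ℝ => s ^ (2 * γ / (γ - 1))) (Icc (1 / 8) 3) :=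
    continuousOn_id.rpow_const fun s hs => Or.inl (by
      have : (1 / 8 : ℝ) ≤ s := hs.1
      simp only [id]
      linarith)
  have hy1 : ∫ t in (0:ℝ)..1, y.1 t ^ 2 = 1 := by
    have h := hconv (fun s => s ^ 2) (continuousOn_pow 2)
    simp only [hu1] at h
    exact tendsto_nhds_unique h tendsto_const_nhds
  have hypos : 0 < ∫ t in (0:ℝ)..1, y.1 t ^ (2 * γ / (γ - 1)) := by
    refine intervalIntegral.intervalIntegral_pos_of_pos_on
      (ContinuousOn.intervalIntegrable_of_Icc zero_le_one
        (hrpow.comp (W12.continuousOn hyW) hyb)) (fun x hx => Real.rpow_pos_of_pos ?_ _)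
        zero_lt_one
    linarith [(hyb x (Ioo_subset_Icc_self hx)).1]
  have hN := (hconv _ hrpow).rpow_const (p := (γ - 1) / γ) (Or.inl hypos.ne')
  have hle := hyL _ (((hlim.comp hφ.tendsto_atTop).sub hN).congr fun n => by
    simp only [Function.comp_apply, Jg, add_sub_cancel_right])
  refine ⟨y, hyM, le_antisymm ?_ (csInf_le hbdd ⟨y, hyM, rfl⟩)⟩
  rw [Gg_eq_of_integral_sq_eq_one γ hy1, Jg]
  linarith
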